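/- Assume condition (D1) (A is increasing on [0,1]). Let T ∈ (0,∞], and let F¹ and F² be two elements of 𝓕(T) such that for every g ∈ C_c^∞([0,T)×ℝ) and every t ∈ [0,T), both F¹ and F² satisfy the weak formulation of the Cauchy problem (with the same initial condition H*m). Then F¹ = F², i.e., for every t ∈ [0,T), F¹_t(x) = F²_t(x) for all x ∈ ℝ. -/

import Mathlib

open MeasureTheory Set Filter Topology Function
open scoped ENNReal

noncomputable section

/-- `primitive f u = ∫₀^u f(v) dv`. -/
def primitive (f : ℝ → ℝ) : ℝ → ℝ := fun u => ∫ v in (0:ℝ)..u, f v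

/-- The cumulative distribution function `H * μ` of a measure `μ` on `ℝ`. -/
def cdfOf (μ : MeasureTheory.Measure ℝ) : ℝ → ℝ := fun x => (μ (Set.Iic x)).toReal

/-- `F` satisfies, on the time interval `[0,T)` (where `T ∈ (0,∞]`), the weak formulation of
`∂ₜ F = (1/2) ∂ₓₓ (A (F)) - ∂ₓ (B (F))` with initial condition `F₀`, for test functions `g`
that are smooth with compact support contained in `[0,T) × ℝ`. -/
def IsWeakSolutionOn (A B : ℝ → ℝ) (F₀ : ℝ → ℝ) (T : ℝ≥0∞) (F : ℝ → ℝ → ℝ) : Prop :=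
  ∀ g : ℝ → ℝ → ℝ, ContDiff ℝ (⊤ : ℕ∞) (Function.uncurry g) →
    HasCompactSupport (Function.uncurry g) →
    (∀ q : ℝ × ℝ, q ∈ tsupport (Function.uncurry g) → ENNReal.ofReal q.1 < T) →
    ∀ t : ℝ, 0 ≤ t → ENNReal.ofReal t < T →
      ((∫ x : ℝ, g t x * F t x) - ∫ x : ℝ, g 0 x * F₀ x) =
        ∫ x : ℝ, ∫ s in (0:ℝ)..t,
          ((1/2) * A (F s x) * deriv (deriv (fun y => g s y)) x
            + B (F s x) * deriv (fun y => g s y) x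
            + F s x * deriv (fun r => g r x) s)

/-- Membership in the class `𝓕(T)` for `T ∈ (0,∞]`: on `[0,T)`, `F t` is the cdf of `P t`
for a weakly continuous flow `t ↦ P t` of probability measures with finite first moments,
the first moment being locally integrable in time on `[0,T)`. -/
def MemFT (T : ℝ≥0∞) (F : ℝ → ℝ → ℝ) : Prop :=
  ∃ P : ℝ → ProbabilityMeasure ℝ,
    ContinuousOn P {t : ℝ | 0 ≤ t ∧ ENNReal.ofReal t < T} ∧
    (∀ t : ℝ, 0 ≤ t → ENNReal.ofReal t < T → Integrable (fun x => |x|) (P t : Measure ℝ)) ∧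
    (∀ K : Set ℝ, IsCompact K → K ⊆ {t : ℝ | 0 ≤ t ∧ ENNReal.ofReal t < T} →
      IntegrableOn (fun t => ∫ x, |x| ∂(P t : Measure ℝ)) K) ∧
    (∀ t : ℝ, 0 ≤ t → ENNReal.ofReal t < T →
      ∀ x : ℝ, F t x = ((P t : Measure ℝ) (Set.Iic x)).toReal)

/-!
The difference `f = F¹ - F²` of two solutions satisfies `∂ₜ f = ∂ₓₓ α - ∂ₓ β` with zero initial
condition, where `α = (A(F¹) - A(F²)) / 2` and `β = B(F¹) - B(F²)`. Integrating once in space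
produces a bounded `w` with `∂ₓ w = f`, `∂ₜ w = ∂ₓ α - β` and `w = 0` at time `0`. Since `A` is
strictly increasing, `f α ≥ 0`, and by compactness `|β| ≤ δ + M f α` for every `δ > 0` and some `M`.

For a positive integrable weight `ψ` with `|ψ'| ≤ κ ψ`, integration by parts gives
`d/dt ∫ ψ e^{lw} = -l ∫ ψ' e^{lw} α - l² ∫ ψ e^{lw} f α - l ∫ ψ e^{lw} β`. The dissipation absorbs
the drift as soon as `l ≥ M`, so that `∫ ψ e^{lw} ≤ C e^{l (κ ‖α‖ + δ) t}` by Grönwall. Letting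
`l → ∞` yields `w ≤ (κ ‖α‖ + δ) t`, then `κ, δ → 0` yields `w ≤ 0`, and the symmetric argument for
`-w` shows that `w` vanishes, hence so does its derivative `f`.
-/

/-! ### Bounded and right-continuous functions -/

/-- Measurable functions bounded by `C` everywhere: the multipliers of integrable functions. The
constant is a parameter so that it can be kept uniform along families of functions. -/
structure IsBoundedMeasurable {X : Type*} [MeasurableSpace X] (C : ℝ) (g : X → ℝ) : Prop where
  measurable : Measurable g
  abs_le : ∀ x, |g x| ≤ C

namespace IsBoundedMeasurable

variable {X : Type*} [MeasurableSpace X] {μ : Measure X} {C D : ℝ} {f g : X → ℝ}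

protected lemma sub (hf : IsBoundedMeasurable C f) (hg : IsBoundedMeasurable D g) :
    IsBoundedMeasurable (C + D) fun x ↦ f x - g x :=
  ⟨hf.measurable.sub hg.measurable,
    fun x ↦ (abs_sub _ _).trans (add_le_add (hf.abs_le x) (hg.abs_le x))⟩

lemma integrable_mul (hg : IsBoundedMeasurable C g) (hf : Integrable f μ) :
    Integrable (fun x ↦ f x * g x) μ :=
  hf.mul_bdd hg.measurable.aestronglyMeasurable (.of_forall hg.abs_le)

lemma locallyIntegrable [TopologicalSpace X] [IsLocallyFiniteMeasure μ]
    (hg : IsBoundedMeasurable C g) : LocallyIntegrable g μ :=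
  (locallyIntegrable_const C).mono hg.measurable.aestronglyMeasurable
    (.of_forall fun x ↦ (hg.abs_le x).trans (le_abs_self C))

end IsBoundedMeasurable

lemma measurable_uncurry_of_continuousWithinAt_Ici {α β : Type*} [MeasurableSpace α]
    [TopologicalSpace β] [TopologicalSpace.PseudoMetrizableSpace β] [MeasurableSpace β]
    [BorelSpace β] {F : α → ℝ → β} (hmeas : ∀ x, Measurable fun s ↦ F s x)
    (hcont : ∀ s x, ContinuousWithinAt (F s) (Ici x) x) : Measurable (uncurry F) := by
  have approx_meas (n : ℕ) : Measurable fun q : α × ℝ ↦ F q.1 (⌈(n + 1 : ℝ) * q.2⌉ / (n + 1)) := by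
    have hF : Measurable fun p : α × ℤ ↦ F p.1 (p.2 / (n + 1)) :=
      measurable_from_prod_countable_left fun k ↦ hmeas (k / (n + 1))
    exact hF.comp (f := fun q : α × ℝ ↦ (q.1, ⌈(n + 1 : ℝ) * q.2⌉)) (by fun_prop)
  refine measurable_of_tendsto_metrizable approx_meas (tendsto_pi_nhds.2 ?_)
  rintro ⟨s, x⟩
  have grid_ge (n : ℕ) : x ≤ ⌈(n + 1 : ℝ) * x⌉ / (n + 1) := by
    rw [le_div_iff₀' (by positivity)]
    exact Int.le_ceil _
  have grid_le (n : ℕ) : (⌈(n + 1 : ℝ) * x⌉ : ℝ) / (n + 1) ≤ x + 1 / (n + 1) := by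
    have : (x + 1 / (n + 1)) * (n + 1) = (n + 1) * x + 1 := by field_simp
    rw [div_le_iff₀ (by positivity)]
    linarith [Int.ceil_lt_add_one ((n + 1 : ℝ) * x)]
  have grid_tendsto : Tendsto (fun n : ℕ ↦ (⌈(n + 1 : ℝ) * x⌉ : ℝ) / (n + 1)) atTop (𝓝[≥] x) := by
    refine tendsto_nhdsWithin_iff.2 ⟨?_, .of_forall grid_ge⟩
    refine tendsto_of_tendsto_of_tendsto_of_le_of_le tendsto_const_nhds ?_ grid_ge grid_le
    simpa using tendsto_one_div_add_atTop_nhds_zero_nat.const_add x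
  exact (hcont s x).tendsto.comp grid_tendsto

lemma eq_of_ae_eq_of_continuousWithinAt_Ici {β : Type*} [TopologicalSpace β] [T2Space β]
    {u v : ℝ → β} (hu : ∀ x, ContinuousWithinAt u (Ici x) x)
    (hv : ∀ x, ContinuousWithinAt v (Ici x) x) (h : u =ᵐ[volume] v) : u = v := by
  funext x
  have freq_eq : ∃ᶠ y in 𝓝[>] x, u y = v y := by
    intro hne
    obtain ⟨z, hxz, hz⟩ := mem_nhdsGT_iff_exists_Ioo_subset.1 hne
    have hnull : volume (Ioo x z) = 0 := measure_mono_null hz h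
    rw [Real.volume_Ioo, ENNReal.ofReal_eq_zero, sub_nonpos] at hnull
    exact hnull.not_gt hxz
  exact tendsto_nhds_unique_of_frequently_eq ((hu x).mono Ioi_subset_Ici_self)
    ((hv x).mono Ioi_subset_Ici_self) freq_eq

lemma intervalIntegrable_of_locallyIntegrable {f : ℝ → ℝ} (hf : LocallyIntegrable f) (a b : ℝ) :
    IntervalIntegrable f volume a b :=
  (hf.integrableOn_isCompact isCompact_uIcc).intervalIntegrable

lemma continuous_integral_of_locallyIntegrable {f : ℝ → ℝ} (hf : LocallyIntegrable f) :
    Continuous fun x ↦ ∫ y in (0 : ℝ)..x, f y :=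
  intervalIntegral.continuous_primitive (intervalIntegrable_of_locallyIntegrable hf) 0

lemma hasDerivWithinAt_Ioi_integral {f : ℝ → ℝ} (hf : LocallyIntegrable f) {x : ℝ}
    (hx : ContinuousWithinAt f (Ici x) x) :
    HasDerivWithinAt (fun x ↦ ∫ y in (0 : ℝ)..x, f y) (f x) (Ioi x) x :=
  (intervalIntegral.integral_hasDerivWithinAt_right
    (intervalIntegrable_of_locallyIntegrable hf _ _) (s := Ici x) (t := Ioi x)
    ⟨univ, univ_mem, hf.aestronglyMeasurable.restrict⟩
    (hx.mono Ioi_subset_Ici_self)).mono Ioi_subset_Ici_self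

lemma integral_eq_zero_of_hasDerivWithinAt_Ioi {v v' : ℝ → ℝ} (hv : Continuous v)
    (hderiv : ∀ x, HasDerivWithinAt v (v' x) (Ioi x) x) (hint : Integrable v')
    (hzero : Tendsto v (cocompact ℝ) (𝓝 0)) : ∫ x, v' x = 0 := by
  have lim_top := hzero.mono_left atTop_le_cocompact
  have lim_bot := (hzero.mono_left atBot_le_cocompact).comp tendsto_neg_atTop_atBot
  have lim_diff : Tendsto (fun R ↦ v R - v (-R)) atTop (𝓝 0) := by
    simpa using lim_top.sub lim_bot
  refine tendsto_nhds_unique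
    (intervalIntegral_tendsto_integral hint tendsto_neg_atTop_atBot tendsto_id) ?_
  refine lim_diff.congr fun R ↦ (intervalIntegral.integral_eq_sub_of_hasDeriv_right
    hv.continuousOn (fun x _ ↦ hderiv x) hint.intervalIntegrable).symm

lemma integral_mul_eq_neg_of_hasDerivWithinAt_Ioi {u u' v v' : ℝ → ℝ} (hu : Continuous u)
    (hv : Continuous v) (hu' : ∀ x, HasDerivWithinAt u (u' x) (Ioi x) x)
    (hv' : ∀ x, HasDerivWithinAt v (v' x) (Ioi x) x) (huv' : Integrable fun x ↦ u x * v' x)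
    (hu'v : Integrable fun x ↦ u' x * v x)
    (hzero : Tendsto (fun x ↦ u x * v x) (cocompact ℝ) (𝓝 0)) :
    ∫ x, u x * v' x = -∫ x, u' x * v x := by
  have key := integral_eq_zero_of_hasDerivWithinAt_Ioi (hu.mul hv)
    (fun x ↦ (hu' x).mul (hv' x)) (hu'v.add huv') hzero
  rw [integral_add hu'v huv'] at key
  linarith

/-! ### Test functions and the du Bois-Reymond lemma -/

/-- Membership in `C_c^∞(ℝ)`: the class of functions of space against which the weak formulation
is tested at a fixed time. -/
structure IsTestFunction (φ : ℝ → ℝ) : Prop where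
  contDiff : ContDiff ℝ (⊤ : ℕ∞) φ
  hasCompactSupport : HasCompactSupport φ

namespace IsTestFunction

variable {φ ψ Q : ℝ → ℝ}

protected lemma deriv (hφ : IsTestFunction φ) : IsTestFunction (deriv φ) :=
  ⟨(contDiff_infty_iff_deriv.1 hφ.contDiff).2, hφ.hasCompactSupport.deriv⟩

lemma hasDerivAt (hφ : IsTestFunction φ) (x : ℝ) : HasDerivAt φ (deriv φ x) x :=
  ((contDiff_infty_iff_deriv.1 hφ.contDiff).1 x).hasDerivAt

lemma sub_const_mul (hφ : IsTestFunction φ) (hψ : IsTestFunction ψ) (c : ℝ) :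
    IsTestFunction fun x ↦ φ x - c * ψ x :=
  ⟨hφ.contDiff.sub (contDiff_const.mul hψ.contDiff),
    hφ.hasCompactSupport.sub hψ.hasCompactSupport.mul_left⟩

lemma integrable (hφ : IsTestFunction φ) : Integrable φ :=
  hφ.contDiff.continuous.integrable_of_hasCompactSupport hφ.hasCompactSupport

lemma integrable_mul (hφ : IsTestFunction φ) (hQ : LocallyIntegrable Q) :
    Integrable fun x ↦ Q x * φ x := by
  simpa [mul_comm] using hQ.integrable_smul_left_of_hasCompactSupport hφ.contDiff.continuous
    hφ.hasCompactSupport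

lemma integral_mul_deriv {u u' : ℝ → ℝ} (hφ : IsTestFunction φ) (hu : Continuous u)
    (hu' : ∀ x, HasDerivWithinAt u (u' x) (Ioi x) x) (hint : LocallyIntegrable u') :
    ∫ x, u x * deriv φ x = -∫ x, u' x * φ x :=
  integral_mul_eq_neg_of_hasDerivWithinAt_Ioi hu hφ.contDiff.continuous hu'
    (fun x ↦ (hφ.hasDerivAt x).hasDerivWithinAt)
    (hφ.deriv.integrable_mul hu.locallyIntegrable) (hφ.integrable_mul hint)
    ((hφ.hasCompactSupport.mul_left).is_zero_at_infty)

lemma exists_deriv_eq (hφ : IsTestFunction φ) (h0 : ∫ x, φ x = 0) :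
    ∃ g, IsTestFunction g ∧ deriv g = φ := by
  obtain ⟨R, -, hR⟩ := hφ.hasCompactSupport.exists_pos_le_norm
  have hcont := hφ.contDiff.continuous
  have hderiv (x : ℝ) : HasDerivAt (fun x ↦ ∫ y in (-R)..x, φ y) (φ x) x :=
    hcont.integral_hasStrictDerivAt (-R) x |>.hasDerivAt
  have hderiv_eq : deriv (fun x ↦ ∫ y in (-R)..x, φ y) = φ := funext fun x ↦ (hderiv x).deriv
  refine ⟨_, ⟨contDiff_infty_iff_deriv.2 ⟨fun x ↦ (hderiv x).differentiableAt,
    hderiv_eq.symm ▸ hφ.contDiff⟩, ?_⟩, hderiv_eq⟩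
  refine .intro (isCompact_Icc (a := -R) (b := R)) fun x hx ↦ ?_
  rcases lt_or_ge x (-R) with hlt | hge
  · rw [intervalIntegral.integral_symm, neg_eq_zero]
    refine intervalIntegral.integral_zero_ae (.of_forall fun y hy ↦ hR y ?_)
    rw [uIoc_of_le hlt.le] at hy
    exact le_abs.2 (.inr (by linarith [hy.2]))
  · have hRx : R < x := not_le.1 fun hle ↦ hx ⟨hge, hle⟩
    change ∫ y in (-R)..x, φ y = 0
    rw [intervalIntegral.integral_eq_integral_of_support_subset, h0]
    intro y hy
    have hyR : |y| < R := not_le.1 fun hle ↦ hy (hR y hle)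
    exact ⟨(abs_lt.1 hyR).1, (abs_lt.1 hyR).2.le.trans hRx.le⟩

end IsTestFunction

lemma exists_isTestFunction_forall_deriv_eq_sub_integral_mul :
    ∃ ρ, IsTestFunction ρ ∧ ∀ φ, IsTestFunction φ →
      ∃ g, IsTestFunction g ∧ deriv g = fun x ↦ φ x - (∫ y, φ y) * ρ x := by
  let bump : ContDiffBump (0 : ℝ) := ⟨1, 2, one_pos, one_lt_two⟩
  have hρ : IsTestFunction (bump.normed volume) :=
    ⟨bump.contDiff_normed, bump.hasCompactSupport_normed⟩
  refine ⟨_, hρ, fun φ hφ ↦ (hφ.sub_const_mul hρ _).exists_deriv_eq ?_⟩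
  rw [integral_sub hφ.integrable (hρ.integrable.const_mul _), integral_const_mul,
    bump.integral_normed, mul_one, sub_self]

lemma exists_ae_eq_const_of_integral_mul_deriv_eq_zero {Q : ℝ → ℝ} (hQ : LocallyIntegrable Q)
    (h : ∀ φ, IsTestFunction φ → ∫ x, Q x * deriv φ x = 0) : ∃ c : ℝ, ∀ᵐ x, Q x = c := by
  obtain ⟨ρ, hρ, hdecomp⟩ := exists_isTestFunction_forall_deriv_eq_sub_integral_mul
  set c := ∫ x, Q x * ρ x
  suffices ∀ᵐ x, Q x - c = 0 from ⟨c, this.mono fun x ↦ sub_eq_zero.1⟩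
  refine ae_eq_zero_of_integral_contDiff_smul_eq_zero (hQ.sub (locallyIntegrable_const c))
    fun φ hφ hφs ↦ ?_
  have hφ : IsTestFunction φ := ⟨hφ, hφs⟩
  obtain ⟨g, hg, hg'⟩ := hdecomp φ hφ
  calc ∫ x, φ x • (Q x - c) = ∫ x, (Q x * φ x - φ x * c) := by simp [mul_sub, mul_comm]
    _ = (∫ x, Q x * φ x) - (∫ x, φ x) * c := by
      rw [integral_sub (hφ.integrable_mul hQ) (hφ.integrable.mul_const c), integral_mul_const]
    _ = ∫ x, (Q x * φ x - (∫ y, φ y) * (Q x * ρ x)) := by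
      rw [integral_sub (hφ.integrable_mul hQ) ((hρ.integrable_mul hQ).const_mul _),
        integral_const_mul]
    _ = ∫ x, Q x * deriv g x := by simp only [hg', mul_sub, mul_left_comm]
    _ = 0 := h g hg

lemma exists_ae_eq_affine_of_integral_mul_deriv_deriv_eq_zero {Q : ℝ → ℝ}
    (hQ : LocallyIntegrable Q) (h : ∀ φ, IsTestFunction φ → ∫ x, Q x * deriv (deriv φ) x = 0) :
    ∃ c d : ℝ, ∀ᵐ x, Q x = c * x + d := by
  obtain ⟨ρ, hρ, hdecomp⟩ := exists_isTestFunction_forall_deriv_eq_sub_integral_mul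
  set c := -∫ x, Q x * deriv ρ x
  have hlin : LocallyIntegrable fun x : ℝ ↦ c * x :=
    (continuous_const.mul continuous_id).locallyIntegrable
  suffices h₁ : ∀ φ, IsTestFunction φ → ∫ x, (Q x - c * x) * deriv φ x = 0 by
    obtain ⟨d, hd⟩ := exists_ae_eq_const_of_integral_mul_deriv_eq_zero (hQ.sub hlin) h₁
    exact ⟨c, d, hd.mono fun x ↦ sub_eq_iff_eq_add'.1⟩
  intro φ hφ
  obtain ⟨g, hg, hg'⟩ := hdecomp φ hφ
  have deriv_deriv_g : deriv (deriv g) = fun x ↦ deriv φ x - (∫ y, φ y) * deriv ρ x := by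
    rw [hg']
    exact funext fun x ↦ ((hφ.hasDerivAt x).sub ((hρ.hasDerivAt x).const_mul _)).deriv
  have integral_Q : ∫ x, Q x * deriv φ x = -(∫ x, φ x) * c := by
    have key := h g hg
    simp only [deriv_deriv_g, mul_sub, mul_left_comm (Q _)] at key
    rw [integral_sub (hφ.deriv.integrable_mul hQ) ((hρ.deriv.integrable_mul hQ).const_mul _),
      integral_const_mul] at key
    linarith
  have integral_lin : ∫ x, c * x * deriv φ x = -(∫ x, φ x) * c := by
    rw [hφ.integral_mul_deriv (u := fun x ↦ c * x) (u' := fun _ ↦ c) (by fun_prop)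
      (fun x ↦ by simpa using ((hasDerivAt_id x).const_mul c).hasDerivWithinAt)
      (locallyIntegrable_const _), integral_const_mul]
    ring
  simp only [sub_mul]
  rw [integral_sub (hφ.deriv.integrable_mul hQ) (hφ.deriv.integrable_mul hlin), integral_Q,
    integral_lin, sub_self]

/-- The weak equation `f = K'' - L'` integrates once: `K' = w + L` with `w' = f`. -/
lemma exists_hasDerivWithinAt_of_integral_mul_eq {f K L : ℝ → ℝ} (hf : LocallyIntegrable f)
    (hK : LocallyIntegrable K) (hL : LocallyIntegrable L)
    (f_right : ∀ x, ContinuousWithinAt f (Ici x) x) (K_right : ∀ x, ContinuousWithinAt K (Ici x) x)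
    (L_right : ∀ x, ContinuousWithinAt L (Ici x) x)
    (h : ∀ φ, IsTestFunction φ →
      ∫ x, f x * φ x = ∫ x, (K x * deriv (deriv φ) x + L x * deriv φ x)) :
    ∃ w : ℝ → ℝ, Continuous w ∧ Continuous K ∧ (∀ x, HasDerivWithinAt w (f x) (Ioi x) x) ∧
      ∀ x, HasDerivWithinAt K (w x + L x) (Ioi x) x := by
  set U : ℝ → ℝ := fun x ↦ ∫ y in (0 : ℝ)..x, f y
  have hU : Continuous U := continuous_integral_of_locallyIntegrable hf
  have hU' x : HasDerivWithinAt U (f x) (Ioi x) x := hasDerivWithinAt_Ioi_integral hf (f_right x)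
  have hUL : LocallyIntegrable fun x ↦ U x + L x := hU.locallyIntegrable.add hL
  set V : ℝ → ℝ := fun x ↦ ∫ y in (0 : ℝ)..x, (U y + L y)
  have hV : Continuous V := continuous_integral_of_locallyIntegrable hUL
  have hV' x : HasDerivWithinAt V (U x + L x) (Ioi x) x :=
    hasDerivWithinAt_Ioi_integral hUL (hU.continuousWithinAt.add (L_right x))
  obtain ⟨c, d, hcd⟩ : ∃ c d : ℝ, ∀ᵐ x, K x - V x = c * x + d := by
    refine exists_ae_eq_affine_of_integral_mul_deriv_deriv_eq_zero
      (hK.sub hV.locallyIntegrable) fun φ hφ ↦ ?_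
    have weak := h φ hφ
    have U_parts := hφ.integral_mul_deriv hU hU' hf
    have V_parts := hφ.deriv.integral_mul_deriv hV hV' hUL
    rw [integral_add (hφ.deriv.deriv.integrable_mul hK) (hφ.deriv.integrable_mul hL)] at weak
    simp only [add_mul] at V_parts
    rw [integral_add (hφ.deriv.integrable_mul hU.locallyIntegrable)
      (hφ.deriv.integrable_mul hL)] at V_parts
    simp only [sub_mul]
    rw [integral_sub (hφ.deriv.deriv.integrable_mul hK)
      (hφ.deriv.deriv.integrable_mul hV.locallyIntegrable)]
    linarith
  have K_eq : K = fun x ↦ V x + (c * x + d) :=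
    eq_of_ae_eq_of_continuousWithinAt_Ici K_right (fun x ↦ by fun_prop)
      (hcd.mono fun x hx ↦ by linarith)
  refine ⟨fun x ↦ U x + c, by fun_prop, by rw [K_eq]; fun_prop, fun x ↦ (hU' x).add_const c,
    fun x ↦ ?_⟩
  rw [K_eq]
  exact ((hV' x).add (((hasDerivAt_id x).const_mul c).add_const d).hasDerivWithinAt).congr_deriv
    (by ring)

/-! ### Regular flows and their time primitives -/

/-- A bounded space-time field `h t x` with the regularity of the cumulative distribution functions
of a weakly continuous flow of probability measures: right-continuous in space and, at each time,
continuous in time at almost every position. -/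
structure IsRegularFlow (C : ℝ) (h : ℝ → ℝ → ℝ) : Prop where
  measurable : Measurable (uncurry h)
  abs_le : ∀ t x, |h t x| ≤ C
  continuousWithinAt_Ici : ∀ t x, ContinuousWithinAt (h t) (Ici x) x
  ae_continuousAt : ∀ t, ∀ᵐ x, ContinuousAt (fun s ↦ h s x) t

/-- `timePrimitive h t x = ∫₀ᵗ h(s, x) ds`. -/
def timePrimitive (h : ℝ → ℝ → ℝ) (t x : ℝ) : ℝ := ∫ s in (0 : ℝ)..t, h s x

@[simp]
lemma timePrimitive_zero (h : ℝ → ℝ → ℝ) : timePrimitive h 0 = fun _ ↦ 0 := by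
  funext x
  simp [timePrimitive]

lemma timePrimitive_neg (h : ℝ → ℝ → ℝ) (t : ℝ) :
    timePrimitive (fun s x ↦ -h s x) t = fun x ↦ -timePrimitive h t x := by
  funext x
  simp [timePrimitive]

namespace IsRegularFlow

variable {C D : ℝ} {h k : ℝ → ℝ → ℝ}

lemma nonneg (hh : IsRegularFlow C h) : 0 ≤ C := (abs_nonneg _).trans (hh.abs_le 0 0)

lemma isBoundedMeasurable (hh : IsRegularFlow C h) (t : ℝ) : IsBoundedMeasurable C (h t) :=
  ⟨hh.measurable.of_uncurry_left, hh.abs_le t⟩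

lemma measurable_time (hh : IsRegularFlow C h) (x : ℝ) : Measurable fun s ↦ h s x :=
  hh.measurable.of_uncurry_right

lemma intervalIntegrable_time (hh : IsRegularFlow C h) (x a b : ℝ) :
    IntervalIntegrable (fun s ↦ h s x) volume a b :=
  intervalIntegrable_of_locallyIntegrable
    (IsBoundedMeasurable.locallyIntegrable ⟨hh.measurable_time x, fun s ↦ hh.abs_le s x⟩) a b

protected lemma neg (hh : IsRegularFlow C h) : IsRegularFlow C fun t x ↦ -h t x where
  measurable := hh.measurable.neg
  abs_le t x := by simpa using hh.abs_le t x
  continuousWithinAt_Ici t x := (hh.continuousWithinAt_Ici t x).neg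
  ae_continuousAt t := (hh.ae_continuousAt t).mono fun _ hx ↦ hx.neg

protected lemma sub (hh : IsRegularFlow C h) (hk : IsRegularFlow D k) :
    IsRegularFlow (C + D) fun t x ↦ h t x - k t x where
  measurable := hh.measurable.sub hk.measurable
  abs_le t x := (abs_sub _ _).trans (add_le_add (hh.abs_le t x) (hk.abs_le t x))
  continuousWithinAt_Ici t x := (hh.continuousWithinAt_Ici t x).sub (hk.continuousWithinAt_Ici t x)
  ae_continuousAt t := by
    filter_upwards [hh.ae_continuousAt t, hk.ae_continuousAt t] with x hx kx using hx.sub kx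

protected lemma comp {s : Set ℝ} {φ : ℝ → ℝ} (hφ : ContinuousOn φ s) (hD : ∀ u ∈ s, |φ u| ≤ D)
    (hh : IsRegularFlow C h) (hs : ∀ t x, h t x ∈ s) : IsRegularFlow D fun t x ↦ φ (h t x) where
  measurable := hφ.domRestrict.measurable.comp (hh.measurable.subtype_mk (h := fun p ↦ hs p.1 p.2))
  abs_le t x := hD _ (hs t x)
  continuousWithinAt_Ici t x := ContinuousWithinAt.comp (t := s) (hφ _ (hs t x))
    (hh.continuousWithinAt_Ici t x) fun y _ ↦ hs t y
  ae_continuousAt t := (hh.ae_continuousAt t).mono fun x hx ↦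
    ((hφ _ (hs t x)).tendsto.comp (tendsto_nhdsWithin_iff.2 ⟨hx, .of_forall fun r ↦ hs r x⟩) :)

lemma timePrimitive_sub_apply (hh : IsRegularFlow C h) (s t x : ℝ) :
    timePrimitive h t x - timePrimitive h s x = ∫ r in s..t, h r x :=
  intervalIntegral.integral_interval_sub_left (hh.intervalIntegrable_time x _ _)
    (hh.intervalIntegrable_time x _ _)

lemma measurable_timePrimitive (hh : IsRegularFlow C h) (t : ℝ) :
    Measurable (timePrimitive h t) := by
  have hm : StronglyMeasurable fun q : ℝ × ℝ ↦ h q.2 q.1 :=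
    (hh.measurable.comp measurable_swap).stronglyMeasurable
  exact (hm.integral_prod_right.sub hm.integral_prod_right).measurable

lemma isBoundedMeasurable_timePrimitive_sub (hh : IsRegularFlow C h) (s t : ℝ) :
    IsBoundedMeasurable (C * |t - s|) (timePrimitive h t - timePrimitive h s) where
  measurable := (hh.measurable_timePrimitive t).sub (hh.measurable_timePrimitive s)
  abs_le x := by
    rw [Pi.sub_apply, hh.timePrimitive_sub_apply]
    exact intervalIntegral.norm_integral_le_of_norm_le_const (f := fun r ↦ h r x)
      fun r _ ↦ hh.abs_le r x

lemma isBoundedMeasurable_timePrimitive (hh : IsRegularFlow C h) (t : ℝ) :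
    IsBoundedMeasurable (C * |t|) (timePrimitive h t) := by
  simpa [Pi.sub_def] using hh.isBoundedMeasurable_timePrimitive_sub 0 t

lemma isBoundedMeasurable_slope_timePrimitive (hh : IsRegularFlow C h) {s t : ℝ} (hst : s ≠ t) :
    IsBoundedMeasurable C (slope (timePrimitive h) s t) where
  measurable := (hh.isBoundedMeasurable_timePrimitive_sub s t).measurable.const_smul (t - s)⁻¹
  abs_le x := by
    have ht : 0 < |t - s| := abs_pos.2 (sub_ne_zero.2 hst.symm)
    have lipschitz := (hh.isBoundedMeasurable_timePrimitive_sub s t).abs_le x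
    rwa [slope_def_module, Pi.smul_apply, smul_eq_mul, abs_mul, abs_inv, inv_mul_le_iff₀ ht,
      mul_comm |t - s|]

lemma continuousWithinAt_Ici_timePrimitive (hh : IsRegularFlow C h) (t x : ℝ) :
    ContinuousWithinAt (timePrimitive h t) (Ici x) x :=
  intervalIntegral.continuousWithinAt_of_dominated_interval (bound := fun _ ↦ C)
    (.of_forall fun y ↦ (hh.measurable_time y).aestronglyMeasurable)
    (.of_forall fun y ↦ .of_forall fun s _ ↦ hh.abs_le s y) intervalIntegrable_const
    (.of_forall fun s _ ↦ hh.continuousWithinAt_Ici s x)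

lemma ae_hasDerivAt_timePrimitive (hh : IsRegularFlow C h) (t : ℝ) :
    ∀ᵐ x, HasDerivAt (fun s ↦ timePrimitive h s x) (h t x) t :=
  (hh.ae_continuousAt t).mono fun x hx ↦
    intervalIntegral.integral_hasDerivAt_right (hh.intervalIntegrable_time x _ _)
      (hh.measurable_time x).stronglyMeasurable.stronglyMeasurableAtFilter hx

lemma continuous_timePrimitive_time (hh : IsRegularFlow C h) (x : ℝ) :
    Continuous fun t ↦ timePrimitive h t x :=
  intervalIntegral.continuous_primitive (hh.intervalIntegrable_time x) 0

lemma timePrimitive_sub (hh : IsRegularFlow C h) (hk : IsRegularFlow D k) (t : ℝ) :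
    timePrimitive (fun s x ↦ h s x - k s x) t =
      fun x ↦ timePrimitive h t x - timePrimitive k t x :=
  funext fun x ↦ intervalIntegral.integral_sub (hh.intervalIntegrable_time x _ _)
    (hk.intervalIntegrable_time x _ _)

end IsRegularFlow

lemma cdfOf_eq_cdf (μ : Measure ℝ) [IsProbabilityMeasure μ] : cdfOf μ = ProbabilityTheory.cdf μ :=
  funext fun x ↦ (ProbabilityTheory.cdf_eq_real μ x).symm

lemma continuousWithinAt_Ici_cdfOf (μ : Measure ℝ) [IsProbabilityMeasure μ] (x : ℝ) :
    ContinuousWithinAt (cdfOf μ) (Ici x) x := by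
  rw [cdfOf_eq_cdf]
  exact (ProbabilityTheory.cdf μ).right_continuous x

lemma locallyIntegrable_cdfOf (μ : Measure ℝ) [IsProbabilityMeasure μ] :
    LocallyIntegrable (cdfOf μ) := by
  rw [cdfOf_eq_cdf]
  exact (ProbabilityTheory.monotone_cdf μ).locallyIntegrable

lemma cdfOf_mem_Icc (μ : Measure ℝ) [IsProbabilityMeasure μ] (x : ℝ) : cdfOf μ x ∈ Icc 0 1 :=
  ⟨measureReal_nonneg, measureReal_le_one⟩

lemma measurable_cdfOf_of_continuous {P : ℝ → ProbabilityMeasure ℝ} (hP : Continuous P) (x : ℝ) :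
    Measurable fun t ↦ cdfOf (P t) x := by
  have usc : UpperSemicontinuous fun t ↦ (P t : Measure ℝ) (Iic x) := fun t c hc ↦
    eventually_lt_of_limsup_lt ((ProbabilityMeasure.limsup_measure_closed_le_of_tendsto
      (hP.tendsto t) isClosed_Iic).trans_lt hc)
  exact usc.measurable.ennreal_toReal

lemma ae_continuousAt_cdfOf_of_continuous {P : ℝ → ProbabilityMeasure ℝ} (hP : Continuous P)
    (t : ℝ) : ∀ᵐ x, ContinuousAt (fun s ↦ cdfOf (P s) x) t := by
  have countable_atoms : {x | 0 < (P t : Measure ℝ) {x}}.Countable :=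
    Measure.countable_meas_pos_of_disjoint_iUnion measurableSet_singleton
      fun x y hxy ↦ by simpa using hxy
  filter_upwards [countable_atoms.ae_notMem volume] with x hx
  have null_frontier : (P t : Measure ℝ) (frontier (Iic x)) = 0 := by
    rw [frontier_Iic]
    exact nonpos_iff_eq_zero.1 (not_lt.1 hx)
  exact (ENNReal.tendsto_toReal (measure_ne_top _ _)).comp
    (ProbabilityMeasure.tendsto_measure_of_null_frontier_of_tendsto' (hP.tendsto t) null_frontier)

lemma isRegularFlow_cdfOf {P : ℝ → ProbabilityMeasure ℝ} (hP : Continuous P) :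
    IsRegularFlow 1 fun t ↦ cdfOf (P t) where
  measurable := measurable_uncurry_of_continuousWithinAt_Ici (measurable_cdfOf_of_continuous hP)
    fun t ↦ continuousWithinAt_Ici_cdfOf (P t)
  abs_le t x := abs_le.2 ⟨by linarith [(cdfOf_mem_Icc (P t) x).1], (cdfOf_mem_Icc (P t) x).2⟩
  continuousWithinAt_Ici t := continuousWithinAt_Ici_cdfOf (P t)
  ae_continuousAt := ae_continuousAt_cdfOf_of_continuous hP

/-! ### From the weak formulation to the integrated equation -/

lemma exists_isTestFunction_eventuallyEq_one {t : ℝ} {T : ℝ≥0∞} (ht : 0 ≤ t)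
    (hT : ENNReal.ofReal t < T) :
    ∃ χ, IsTestFunction χ ∧ (∀ s ∈ tsupport χ, ENNReal.ofReal s < T) ∧
      ∀ s ∈ Icc 0 t, χ =ᶠ[𝓝 s] 1 := by
  obtain ⟨r, -, htr, hrT⟩ := ENNReal.lt_iff_exists_real_btwn.1 hT
  have htr : t < r := (ENNReal.ofReal_lt_ofReal_iff'.1 htr).1
  let χ : ContDiffBump (0 : ℝ) := ⟨(t + r) / 2, r, by linarith, by linarith⟩
  refine ⟨χ, ⟨χ.contDiff, χ.hasCompactSupport⟩, fun s hs ↦ ?_, fun s hs ↦ ?_⟩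
  · rw [χ.tsupport_eq, mem_closedBall_zero_iff] at hs
    exact (ENNReal.ofReal_le_ofReal ((le_abs_self s).trans hs)).trans_lt hrT
  · refine χ.eventuallyEq_one_of_mem_ball ?_
    rw [mem_ball_zero_iff, Real.norm_eq_abs, abs_of_nonneg hs.1]
    change s < (t + r) / 2
    linarith [hs.2]

namespace IsWeakSolutionOn

variable {A B F₀ φ : ℝ → ℝ} {T : ℝ≥0∞} {F G : ℝ → ℝ → ℝ} {t C D : ℝ}

lemma integral_sub_integral_eq (hF : IsWeakSolutionOn A B F₀ T F) (ht : 0 ≤ t)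
    (hT : ENNReal.ofReal t < T) (hφ : IsTestFunction φ) :
    (∫ x, F t x * φ x) - ∫ x, F₀ x * φ x =
      ∫ x, ∫ s in (0 : ℝ)..t, (1 / 2 * A (F s x) * deriv (deriv φ) x + B (F s x) * deriv φ x) := by
  obtain ⟨χ, hχ, hχT, hχ1⟩ := exists_isTestFunction_eventuallyEq_one ht hT
  have one_at {s : ℝ} (hs : s ∈ Icc 0 t) : χ s = 1 := (hχ1 s hs).eq_of_nhds
  have tsupport_fst : tsupport (uncurry fun s x ↦ χ s * φ x) ⊆ Prod.fst ⁻¹' tsupport χ :=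
    closure_minimal (fun p hp ↦ subset_tsupport χ (left_ne_zero_of_mul hp))
      ((isClosed_tsupport χ).preimage continuous_fst)
  have compact_support : HasCompactSupport (uncurry fun s x ↦ χ s * φ x) := by
    refine .intro (hχ.hasCompactSupport.isCompact.prod hφ.hasCompactSupport) fun p hp ↦ ?_
    by_contra hne
    exact hp ⟨subset_tsupport χ (left_ne_zero_of_mul hne),
      subset_tsupport φ (right_ne_zero_of_mul hne)⟩
  have key := hF (fun s x ↦ χ s * φ x)
    ((hχ.contDiff.comp contDiff_fst).mul (hφ.contDiff.comp contDiff_snd)) compact_support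
    (fun q hq ↦ hχT q.1 (tsupport_fst hq)) t ht hT
  simp only [one_at (right_mem_Icc.2 ht), one_at (left_mem_Icc.2 ht), one_mul,
    mul_comm (φ _)] at key
  rw [key]
  refine integral_congr_ae (.of_forall fun x ↦ intervalIntegral.integral_congr fun s hs ↦ ?_)
  rw [uIcc_of_le ht] at hs
  have time_deriv : deriv (fun r ↦ χ r * φ x) s = 0 := by
    rw [deriv_mul_const_field, (hχ1 s hs).deriv_eq]
    simp
  simp only [time_deriv, one_at hs, one_mul, mul_zero, add_zero]

lemma integral_mul_eq (hF : IsWeakSolutionOn A B F₀ T F) (ht : 0 ≤ t) (hT : ENNReal.ofReal t < T)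
    (hF₀ : LocallyIntegrable F₀) (hFt : LocallyIntegrable (F t))
    (hFG : ∀ s ∈ Icc 0 t, F s = G s) (hA : IsRegularFlow C fun s x ↦ 1 / 2 * A (G s x))
    (hB : IsRegularFlow D fun s x ↦ B (G s x)) (hφ : IsTestFunction φ) :
    ∫ x, (F t x - F₀ x) * φ x =
      ∫ x, (timePrimitive (fun s x ↦ 1 / 2 * A (G s x)) t x * deriv (deriv φ) x +
        timePrimitive (fun s x ↦ B (G s x)) t x * deriv φ x) := by
  simp only [sub_mul]
  rw [integral_sub (hφ.integrable_mul hFt) (hφ.integrable_mul hF₀),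
    hF.integral_sub_integral_eq ht hT hφ]
  refine integral_congr_ae (.of_forall fun x ↦ ?_)
  simp only [timePrimitive]
  rw [← intervalIntegral.integral_mul_const, ← intervalIntegral.integral_mul_const,
    ← intervalIntegral.integral_add ((hA.intervalIntegrable_time x 0 t).mul_const _)
      ((hB.intervalIntegrable_time x 0 t).mul_const _)]
  refine intervalIntegral.integral_congr fun s hs ↦ ?_
  rw [uIcc_of_le ht] at hs
  simp only [hFG s hs]

end IsWeakSolutionOn

/-- Once integrated in space, the equation `∂ₜ f = ∂ₓₓ α - ∂ₓ β` with zero initial condition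
becomes `∂ₓ w = f` and `∂ₜ w = ∂ₓ α - β`. This is the latter system on the time interval `[0, τ]`,
with its second equation integrated in time; spatial derivatives are right derivatives because `f`
may jump. -/
structure IsIntegratedSolution (τ : ℝ) (f α β w : ℝ → ℝ → ℝ) : Prop where
  continuous : ∀ t ∈ Icc 0 τ, Continuous (w t)
  continuous_timePrimitive : ∀ t ∈ Icc 0 τ, Continuous (timePrimitive α t)
  hasDerivWithinAt : ∀ t ∈ Icc 0 τ, ∀ x, HasDerivWithinAt (w t) (f t x) (Ioi x) x
  hasDerivWithinAt_timePrimitive : ∀ t ∈ Icc 0 τ, ∀ x,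
    HasDerivWithinAt (timePrimitive α t) (w t x + timePrimitive β t x) (Ioi x) x

namespace IsIntegratedSolution

variable {τ C₁ C₂ D₁ D₂ : ℝ} {f α β w f₁ α₁ β₁ w₁ f₂ α₂ β₂ w₂ : ℝ → ℝ → ℝ}

protected lemma neg (h : IsIntegratedSolution τ f α β w) :
    IsIntegratedSolution τ (fun t x ↦ -f t x) (fun t x ↦ -α t x) (fun t x ↦ -β t x)
      fun t x ↦ -w t x where
  continuous t ht := (h.continuous t ht).neg
  continuous_timePrimitive t ht := by
    rw [timePrimitive_neg]
    exact (h.continuous_timePrimitive t ht).neg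
  hasDerivWithinAt t ht x := (h.hasDerivWithinAt t ht x).neg
  hasDerivWithinAt_timePrimitive t ht x := by
    rw [timePrimitive_neg, timePrimitive_neg]
    exact (h.hasDerivWithinAt_timePrimitive t ht x).neg.congr_deriv (by ring)

protected lemma sub (h₁ : IsIntegratedSolution τ f₁ α₁ β₁ w₁)
    (h₂ : IsIntegratedSolution τ f₂ α₂ β₂ w₂) (hα₁ : IsRegularFlow C₁ α₁)
    (hα₂ : IsRegularFlow C₂ α₂) (hβ₁ : IsRegularFlow D₁ β₁) (hβ₂ : IsRegularFlow D₂ β₂) :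
    IsIntegratedSolution τ (fun t x ↦ f₁ t x - f₂ t x) (fun t x ↦ α₁ t x - α₂ t x)
      (fun t x ↦ β₁ t x - β₂ t x) fun t x ↦ w₁ t x - w₂ t x where
  continuous t ht := (h₁.continuous t ht).sub (h₂.continuous t ht)
  continuous_timePrimitive t ht := by
    rw [hα₁.timePrimitive_sub hα₂]
    exact (h₁.continuous_timePrimitive t ht).sub (h₂.continuous_timePrimitive t ht)
  hasDerivWithinAt t ht x := (h₁.hasDerivWithinAt t ht x).sub (h₂.hasDerivWithinAt t ht x)
  hasDerivWithinAt_timePrimitive t ht x := by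
    rw [hα₁.timePrimitive_sub hα₂, hβ₁.timePrimitive_sub hβ₂]
    exact ((h₁.hasDerivWithinAt_timePrimitive t ht x).sub
      (h₂.hasDerivWithinAt_timePrimitive t ht x)).congr_deriv (by ring)

end IsIntegratedSolution

lemma IsWeakSolutionOn.exists_isIntegratedSolution {A B F₀ : ℝ → ℝ} {T : ℝ≥0∞} {τ C D E : ℝ}
    {F G : ℝ → ℝ → ℝ} (hF : IsWeakSolutionOn A B F₀ T F) (hτ : ENNReal.ofReal τ < T)
    (hF₀ : LocallyIntegrable F₀) (F₀_right : ∀ x, ContinuousWithinAt F₀ (Ici x) x)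
    (hFG : ∀ t ∈ Icc 0 τ, F t = G t) (hG : IsRegularFlow C G)
    (hA : IsRegularFlow D fun t x ↦ 1 / 2 * A (G t x))
    (hB : IsRegularFlow E fun t x ↦ B (G t x)) :
    ∃ w, IsIntegratedSolution τ (fun t x ↦ G t x - F₀ x) (fun t x ↦ 1 / 2 * A (G t x))
      (fun t x ↦ B (G t x)) w := by
  have integrated (t : ℝ) (ht : t ∈ Icc 0 τ) :=
    exists_hasDerivWithinAt_of_integral_mul_eq
      ((hG.isBoundedMeasurable t).locallyIntegrable.sub hF₀)
      (hA.isBoundedMeasurable_timePrimitive t).locallyIntegrable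
      (hB.isBoundedMeasurable_timePrimitive t).locallyIntegrable
      (fun x ↦ (hG.continuousWithinAt_Ici t x).sub (F₀_right x))
      (hA.continuousWithinAt_Ici_timePrimitive t) (hB.continuousWithinAt_Ici_timePrimitive t)
      fun φ hφ ↦ by
        rw [← hFG t ht]
        exact hF.integral_mul_eq ht.1 ((ENNReal.ofReal_le_ofReal ht.2).trans_lt hτ) hF₀
          (hFG t ht ▸ (hG.isBoundedMeasurable t).locallyIntegrable)
          (fun s hs ↦ hFG s ⟨hs.1, hs.2.trans ht.2⟩) hA hB hφ
  choose! w w_cont α_cont w_deriv α_deriv using integrated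
  exact ⟨w, w_cont, α_cont, w_deriv, α_deriv⟩

/-! ### The weighted exponential energy -/

/-- The integrable weight `ψ(x) = 1 / (1 + (κx)²)`, which varies slowly: `|ψ'| ≤ κψ`. -/
def weight (κ x : ℝ) : ℝ := (1 + (κ * x) ^ 2)⁻¹

/-- The density `ψ e^{lu}` of the energy of `u`, where `ψ = weight κ`. -/
def weightedExp (κ l : ℝ) (u : ℝ → ℝ) (x : ℝ) : ℝ := weight κ x * Real.exp (l * u x)

/-- The derivative of the energy density `ψ e^{lu}` when `u'` is the derivative of `u`. -/
def weightedExpDeriv (κ l : ℝ) (u' u : ℝ → ℝ) (x : ℝ) : ℝ :=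
  Real.exp (l * u x) * (deriv (weight κ) x + l * (weight κ x * u' x))

/-- The energy `∫ ψ e^{lu}`. -/
def energy (κ l : ℝ) (u : ℝ → ℝ) : ℝ := ∫ x, weightedExp κ l u x

/-- The rate of change of the energy of `u` under `∂ₜ u = ∂ₓ a - b`, after integration by parts:
`-l ∫ ((ψ e^{lu})' a + ψ e^{lu} b)`, where `u'` is the spatial derivative of `u`. -/
def energyRate (κ l : ℝ) (u' u a b : ℝ → ℝ) : ℝ :=
  l * ∫ x, -(weightedExpDeriv κ l u' u x * a x + weightedExp κ l u x * b x)

section Weight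

variable {κ : ℝ}

lemma weight_pos (κ x : ℝ) : 0 < weight κ x := by
  unfold weight
  positivity

lemma hasDerivAt_weight (κ x : ℝ) :
    HasDerivAt (weight κ) (-(2 * κ ^ 2 * x) / (1 + (κ * x) ^ 2) ^ 2) x := by
  have hsq : HasDerivAt (fun x ↦ 1 + (κ * x) ^ 2) (2 * κ ^ 2 * x) x :=
    ((((hasDerivAt_id x).const_mul κ).pow 2).const_add 1).congr_deriv (by simp; ring)
  exact hsq.inv (by positivity)

lemma continuous_weight (κ : ℝ) : Continuous (weight κ) :=
  continuous_iff_continuousAt.2 fun x ↦ (hasDerivAt_weight κ x).continuousAt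

lemma integrable_weight (hκ : 0 < κ) : Integrable (weight κ) :=
  integrable_inv_one_add_sq.comp_mul_left' hκ.ne'

lemma tendsto_weight_cocompact (hκ : 0 < κ) : Tendsto (weight κ) (cocompact ℝ) (𝓝 0) := by
  refine tendsto_inv_atTop_zero.comp (tendsto_atTop_add_const_left _ 1 ?_)
  have hκx : Tendsto (fun x ↦ κ * |x|) (cocompact ℝ) atTop :=
    tendsto_norm_cocompact_atTop.const_mul_atTop hκ
  refine ((tendsto_pow_atTop two_ne_zero).comp hκx).congr fun x ↦ ?_
  simp [mul_pow]

lemma abs_deriv_weight_le (hκ : 0 < κ) (x : ℝ) : |deriv (weight κ) x| ≤ κ * weight κ x := by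
  have hpos : 0 < 1 + (κ * x) ^ 2 := by positivity
  have am_gm : 2 * (κ * |x|) ≤ 1 + (κ * x) ^ 2 := by
    rw [mul_pow, ← sq_abs x]
    linarith [two_mul_le_add_sq 1 (κ * |x|), mul_pow κ |x| 2]
  calc |deriv (weight κ) x|
      = κ * (2 * (κ * |x|)) / (1 + (κ * x) ^ 2) ^ 2 := by
        rw [(hasDerivAt_weight κ x).deriv, abs_div, abs_neg, abs_mul, abs_mul,
          abs_of_pos (pow_pos hpos 2), abs_of_pos (pow_pos hκ 2), abs_two]
        ring
    _ ≤ κ * (1 + (κ * x) ^ 2) / (1 + (κ * x) ^ 2) ^ 2 := by gcongr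
    _ = κ * weight κ x := by
        unfold weight
        field_simp

end Weight

section Energy

variable {κ l C D E R : ℝ} {u u' v a b : ℝ → ℝ}

lemma weightedExp_pos (κ l : ℝ) (u : ℝ → ℝ) (x : ℝ) : 0 < weightedExp κ l u x :=
  mul_pos (weight_pos κ x) (Real.exp_pos _)

lemma abs_weightedExp_le (κ : ℝ) (hl : 0 ≤ l) {x : ℝ} (hu : |u x| ≤ R) :
    |weightedExp κ l u x| ≤ weight κ x * Real.exp (l * R) := by
  rw [abs_of_pos (weightedExp_pos κ l u x)]
  refine mul_le_mul_of_nonneg_left (Real.exp_le_exp.2 ?_) (weight_pos κ x).le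
  exact mul_le_mul_of_nonneg_left ((le_abs_self _).trans hu) hl

lemma continuous_weightedExp (κ l : ℝ) (hu : Continuous u) : Continuous (weightedExp κ l u) :=
  (continuous_weight κ).mul (Real.continuous_exp.comp (continuous_const.mul hu))

lemma measurable_weightedExp (κ l : ℝ) (hu : Measurable u) : Measurable (weightedExp κ l u) :=
  (continuous_weight κ).measurable.mul (hu.const_mul l).exp

lemma integrable_weightedExp (hκ : 0 < κ) (hl : 0 ≤ l) (hu : IsBoundedMeasurable R u) :
    Integrable (weightedExp κ l u) :=
  ((integrable_weight hκ).mul_const _).mono'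
    (measurable_weightedExp κ l hu.measurable).aestronglyMeasurable
    (.of_forall fun x ↦ abs_weightedExp_le κ hl (hu.abs_le x))

lemma tendsto_weightedExp_mul_cocompact (hκ : 0 < κ) (hl : 0 ≤ l) (hu : ∀ x, |u x| ≤ R)
    (ha : ∀ x, |a x| ≤ C) :
    Tendsto (fun x ↦ weightedExp κ l u x * a x) (cocompact ℝ) (𝓝 0) := by
  have hlim : Tendsto (weightedExp κ l u) (cocompact ℝ) (𝓝 0) :=
    squeeze_zero_norm (fun x ↦ abs_weightedExp_le κ hl (hu x))
      (by simpa using (tendsto_weight_cocompact hκ).mul_const (Real.exp (l * R)))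
  exact hlim.zero_mul_isBoundedUnder_le (isBoundedUnder_of ⟨C, ha⟩)

lemma hasDerivWithinAt_weightedExp (κ l : ℝ) {s : Set ℝ} {x : ℝ}
    (hu : HasDerivWithinAt u (u' x) s x) :
    HasDerivWithinAt (weightedExp κ l u) (weightedExpDeriv κ l u' u x) s x := by
  have hweight := (hasDerivAt_weight κ x).differentiableAt.hasDerivAt.hasDerivWithinAt (s := s)
  refine (hweight.mul (hu.const_mul l).exp).congr_deriv ?_
  unfold weightedExpDeriv
  ring

lemma measurable_weightedExpDeriv (κ l : ℝ) (hu' : Measurable u') (hu : Measurable u) :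
    Measurable (weightedExpDeriv κ l u' u) := by
  have := (continuous_weight κ).measurable
  have := measurable_deriv (weight κ)
  unfold weightedExpDeriv
  fun_prop

lemma abs_weightedExpDeriv_le (hκ : 0 < κ) (hl : 0 ≤ l) {x : ℝ} (hu' : |u' x| ≤ C)
    (hu : |u x| ≤ R) :
    |weightedExpDeriv κ l u' u x| ≤ weight κ x * (Real.exp (l * R) * (κ + l * C)) := by
  have hψ := weight_pos κ x
  have exp_le : Real.exp (l * u x) ≤ Real.exp (l * R) := by
    gcongr
    exact (le_abs_self _).trans hu
  have factor_le : |deriv (weight κ) x + l * (weight κ x * u' x)| ≤ weight κ x * (κ + l * C) :=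
    calc |deriv (weight κ) x + l * (weight κ x * u' x)|
        ≤ |deriv (weight κ) x| + l * (weight κ x * |u' x|) := by
          refine (abs_add_le _ _).trans_eq ?_
          rw [abs_mul, abs_mul, abs_of_nonneg hl, abs_of_pos hψ]
      _ ≤ κ * weight κ x + l * (weight κ x * C) := by
          gcongr
          exact abs_deriv_weight_le hκ x
      _ = weight κ x * (κ + l * C) := by ring
  calc |weightedExpDeriv κ l u' u x|
      = Real.exp (l * u x) * |deriv (weight κ) x + l * (weight κ x * u' x)| := by
        rw [weightedExpDeriv, abs_mul, Real.abs_exp]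
    _ ≤ Real.exp (l * R) * (weight κ x * (κ + l * C)) := by gcongr
    _ = weight κ x * (Real.exp (l * R) * (κ + l * C)) := by ring

lemma integrable_weightedExpDeriv (hκ : 0 < κ) (hl : 0 ≤ l) (hu' : IsBoundedMeasurable C u')
    (hu : IsBoundedMeasurable R u) : Integrable (weightedExpDeriv κ l u' u) :=
  ((integrable_weight hκ).mul_const _).mono'
    (measurable_weightedExpDeriv κ l hu'.measurable hu.measurable).aestronglyMeasurable
    (.of_forall fun x ↦ abs_weightedExpDeriv_le hκ hl (hu'.abs_le x) (hu.abs_le x))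

lemma energyRate_smul (κ l c : ℝ) (u' u a b : ℝ → ℝ) :
    energyRate κ l u' u (c • a) (c • b) = c * energyRate κ l u' u a b := by
  unfold energyRate
  rw [mul_left_comm, ← integral_const_mul c]
  congr 2
  funext x
  simp only [Pi.smul_apply, smul_eq_mul]
  ring

lemma weightedExp_sub_weightedExp_le (κ l : ℝ) (u v : ℝ → ℝ) (x : ℝ) :
    weightedExp κ l u x - weightedExp κ l v x ≤ l * (weightedExp κ l u x * (u x - v x)) := by
  have tangent := mul_le_mul_of_nonneg_left (Real.add_one_le_exp (l * v x - l * u x))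
    (weightedExp_pos κ l u x).le
  have exp_shift : weightedExp κ l u x * Real.exp (l * v x - l * u x) = weightedExp κ l v x := by
    rw [weightedExp, weightedExp, mul_assoc, ← Real.exp_add, add_sub_cancel]
  rw [exp_shift] at tangent
  linarith

lemma integral_weightedExp_mul_sub_eq (hκ : 0 < κ) (hl : 0 ≤ l) (hu_cont : Continuous u)
    (hu : IsBoundedMeasurable R u) (hv : IsBoundedMeasurable R v)
    (hu' : IsBoundedMeasurable C u') (u_deriv : ∀ x, HasDerivWithinAt u (u' x) (Ioi x) x)
    (ha_cont : Continuous a) (ha : IsBoundedMeasurable D a) (hb : IsBoundedMeasurable E b)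
    (a_deriv : ∀ x, HasDerivWithinAt a (u x - v x + b x) (Ioi x) x) :
    l * ∫ x, weightedExp κ l u x * (u x - v x) = energyRate κ l u' u a b := by
  have int_exp := integrable_weightedExp hκ hl hu
  have int_uv := (hu.sub hv).integrable_mul int_exp
  have int_b := hb.integrable_mul int_exp
  have int_a := ha.integrable_mul (integrable_weightedExpDeriv hκ hl hu' hu)
  have parts := integral_mul_eq_neg_of_hasDerivWithinAt_Ioi (continuous_weightedExp κ l hu_cont)
    ha_cont (fun x ↦ hasDerivWithinAt_weightedExp κ l (u_deriv x)) a_deriv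
    (by simp only [mul_add]; exact int_uv.add int_b) int_a
    (tendsto_weightedExp_mul_cocompact hκ hl hu.abs_le ha.abs_le)
  simp only [mul_add] at parts
  rw [integral_add int_uv int_b] at parts
  rw [energyRate, integral_neg, integral_add int_a int_b]
  congr 1
  linarith

lemma energy_sub_energy_le (hκ : 0 < κ) (hl : 0 ≤ l) (hu_cont : Continuous u)
    (hu : IsBoundedMeasurable R u) (hv : IsBoundedMeasurable R v)
    (hu' : IsBoundedMeasurable C u') (u_deriv : ∀ x, HasDerivWithinAt u (u' x) (Ioi x) x)
    (ha_cont : Continuous a) (ha : IsBoundedMeasurable D a) (hb : IsBoundedMeasurable E b)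
    (a_deriv : ∀ x, HasDerivWithinAt a (u x - v x + b x) (Ioi x) x) :
    energy κ l u - energy κ l v ≤ energyRate κ l u' u a b := by
  have int_u := integrable_weightedExp hκ hl hu
  have int_v := integrable_weightedExp hκ hl hv
  rw [← integral_weightedExp_mul_sub_eq hκ hl hu_cont hu hv hu' u_deriv ha_cont ha hb a_deriv,
    ← integral_const_mul, energy, energy, ← integral_sub int_u int_v]
  exact integral_mono (int_u.sub int_v) (((hu.sub hv).integrable_mul int_u).const_mul l)
    (weightedExp_sub_weightedExp_le κ l u v)

-- The exponential produces the dissipation `l u' a`, which absorbs `|b|` as soon as `M ≤ l`.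
lemma energyRate_le {δ M : ℝ} (hκ : 0 < κ) (hl : 0 ≤ l) (hlM : M ≤ l)
    (hu : IsBoundedMeasurable R u) (hu' : IsBoundedMeasurable C u') (ha : IsBoundedMeasurable D a)
    (hb : IsBoundedMeasurable E b) (hnonneg : ∀ x, 0 ≤ u' x * a x)
    (hM : ∀ x, |b x| ≤ δ + M * (u' x * a x)) :
    energyRate κ l u' u a b ≤ l * (κ * D + δ) * energy κ l u := by
  have int_exp := integrable_weightedExp hκ hl hu
  have int_b := hb.integrable_mul int_exp
  have int_a := ha.integrable_mul (integrable_weightedExpDeriv hκ hl hu' hu)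
  rw [energyRate, energy, mul_assoc, ← integral_const_mul (κ * D + δ)]
  refine mul_le_mul_of_nonneg_left ?_ hl
  refine integral_mono (int_a.add int_b).neg (int_exp.const_mul _) fun x ↦ ?_
  have hψ := weight_pos κ x
  have weight_term : -(deriv (weight κ) x * a x) ≤ weight κ x * (κ * D) :=
    calc -(deriv (weight κ) x * a x) ≤ |deriv (weight κ) x| * |a x| :=
          (neg_le_abs _).trans_eq (abs_mul _ _)
      _ ≤ κ * weight κ x * D := by
          gcongr
          exacts [abs_deriv_weight_le hκ x, ha.abs_le x]
      _ = weight κ x * (κ * D) := by ring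
  have drift_term : -b x - l * (u' x * a x) ≤ δ := by
    linarith [(neg_le_abs _).trans (hM x), mul_le_mul_of_nonneg_right hlM (hnonneg x)]
  calc -(weightedExpDeriv κ l u' u x * a x + weightedExp κ l u x * b x)
      = Real.exp (l * u x) * (-(deriv (weight κ) x * a x) +
          weight κ x * (-b x - l * (u' x * a x))) := by
        rw [weightedExpDeriv, weightedExp]
        ring
    _ ≤ Real.exp (l * u x) * (weight κ x * (κ * D) + weight κ x * δ) := by gcongr
    _ = (κ * D + δ) * weightedExp κ l u x := by
        rw [weightedExp]
        ring

lemma tendsto_energy {ι : Type*} {F : Filter ι} [F.IsCountablyGenerated] {u : ι → ℝ → ℝ}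
    {u₀ : ℝ → ℝ} (hκ : 0 < κ) (hl : 0 ≤ l) (hu : ∀ᶠ i in F, IsBoundedMeasurable R (u i))
    (hlim : ∀ x, Tendsto (fun i ↦ u i x) F (𝓝 (u₀ x))) :
    Tendsto (fun i ↦ energy κ l (u i)) F (𝓝 (energy κ l u₀)) := by
  refine tendsto_integral_filter_of_dominated_convergence (fun x ↦ weight κ x * Real.exp (l * R))
    (hu.mono fun i hi ↦ (measurable_weightedExp κ l hi.measurable).aestronglyMeasurable)
    (hu.mono fun i hi ↦ .of_forall fun x ↦ abs_weightedExp_le κ hl (hi.abs_le x))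
    ((integrable_weight hκ).mul_const _) (.of_forall fun x ↦ ?_)
  exact (((hlim x).const_mul l).rexp).const_mul _

lemma tendsto_energyRate {ι : Type*} {F : Filter ι} [F.IsCountablyGenerated]
    {u' u a b : ι → ℝ → ℝ} {u'₀ u₀ a₀ b₀ : ℝ → ℝ} (hκ : 0 < κ) (hl : 0 ≤ l)
    (hu' : ∀ᶠ i in F, IsBoundedMeasurable C (u' i)) (hu : ∀ᶠ i in F, IsBoundedMeasurable R (u i))
    (ha : ∀ᶠ i in F, IsBoundedMeasurable D (a i)) (hb : ∀ᶠ i in F, IsBoundedMeasurable E (b i))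
    (u'_lim : ∀ᵐ x, Tendsto (fun i ↦ u' i x) F (𝓝 (u'₀ x)))
    (u_lim : ∀ x, Tendsto (fun i ↦ u i x) F (𝓝 (u₀ x)))
    (a_lim : ∀ᵐ x, Tendsto (fun i ↦ a i x) F (𝓝 (a₀ x)))
    (b_lim : ∀ᵐ x, Tendsto (fun i ↦ b i x) F (𝓝 (b₀ x))) :
    Tendsto (fun i ↦ energyRate κ l (u' i) (u i) (a i) (b i)) F
      (𝓝 (energyRate κ l u'₀ u₀ a₀ b₀)) := by
  refine Tendsto.const_mul l (tendsto_integral_filter_of_dominated_convergence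
    (fun x ↦ weight κ x * (Real.exp (l * R) * (κ + l * C)) * D + weight κ x * Real.exp (l * R) * E)
    ?_ ?_ ?_ ?_)
  · filter_upwards [hu', hu, ha, hb] with i hu' hu ha hb
    have measurable_exp := measurable_weightedExp κ l hu.measurable
    have measurable_deriv := measurable_weightedExpDeriv κ l hu'.measurable hu.measurable
    exact ((measurable_deriv.mul ha.measurable).add
      (measurable_exp.mul hb.measurable)).neg.aestronglyMeasurable
  · filter_upwards [hu', hu, ha, hb] with i hu' hu ha hb
    refine .of_forall fun x ↦ ?_
    rw [norm_neg]
    refine (norm_add_le _ _).trans (add_le_add ?_ ?_)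
    · exact norm_mul_le_of_le (abs_weightedExpDeriv_le hκ hl (hu'.abs_le x) (hu.abs_le x))
        (ha.abs_le x)
    · exact norm_mul_le_of_le (abs_weightedExp_le κ hl (hu.abs_le x)) (hb.abs_le x)
  · exact (((integrable_weight hκ).mul_const _).mul_const D).add
      (((integrable_weight hκ).mul_const _).mul_const E)
  · filter_upwards [u'_lim, a_lim, b_lim] with x u'_lim a_lim b_lim
    have exp_lim := ((u_lim x).const_mul l).rexp
    have deriv_lim := exp_lim.mul (((u'_lim.const_mul (weight κ x)).const_mul l).const_add
      (deriv (weight κ) x))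
    exact ((deriv_lim.mul a_lim).add ((exp_lim.const_mul (weight κ x)).mul b_lim)).neg

end Energy

lemma le_of_integral_mul_exp_le {X : Type*} [TopologicalSpace X] [MeasurableSpace X]
    [OpensMeasurableSpace X] {μ : Measure X} [μ.IsOpenPosMeasure] {ψ u : X → ℝ} {L J q : ℝ}
    (hψ : ∀ y, 0 < ψ y) (hψ_int : Integrable ψ μ) (hu : Continuous u)
    (hint : ∀ l ≥ L, Integrable (fun y ↦ ψ y * Real.exp (l * u y)) μ)
    (hle : ∀ l ≥ L, ∫ y, ψ y * Real.exp (l * u y) ∂μ ≤ J * Real.exp (l * q)) (x : X) :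
    u x ≤ q := by
  by_contra! hqx
  obtain ⟨p, hqp, hpx⟩ := exists_between hqx
  set s : Set X := {y | p < u y}
  have hs : IsOpen s := isOpen_lt continuous_const hu
  have mass_pos : 0 < ∫ y in s, ψ y ∂μ := by
    rw [setIntegral_pos_iff_support_of_nonneg_ae (.of_forall fun y ↦ (hψ y).le)
      hψ_int.integrableOn, support_eq_univ fun y ↦ (hψ y).ne', univ_inter]
    exact hs.measure_pos μ ⟨x, hpx⟩
  have lower (l : ℝ) (hl : L ≤ l) (hl0 : 0 ≤ l) :
      (∫ y in s, ψ y ∂μ) * Real.exp (l * p) ≤ ∫ y, ψ y * Real.exp (l * u y) ∂μ := by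
    rw [← integral_mul_const]
    refine (setIntegral_mono_on (hψ_int.mul_const _).integrableOn (hint l hl).integrableOn
      hs.measurableSet fun y hy ↦ ?_).trans (setIntegral_le_integral (hint l hl)
        (.of_forall fun y ↦ (mul_pos (hψ y) (Real.exp_pos _)).le))
    have := (hψ y).le
    gcongr
    exact (show p < u y from hy).le
  have growth : Tendsto (fun l ↦ (∫ y in s, ψ y ∂μ) * Real.exp (l * (p - q))) atTop atTop :=
    (Real.tendsto_exp_atTop.comp
      (tendsto_id.atTop_mul_const (sub_pos.2 hqp))).const_mul_atTop mass_pos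
  obtain ⟨l, hJ, hL, h0⟩ := ((growth.eventually_gt_atTop J).and
    ((eventually_ge_atTop L).and (eventually_ge_atTop 0))).exists
  have upper := (lower l hL h0).trans (hle l hL)
  rw [show l * p = l * (p - q) + l * q by ring, Real.exp_add, ← mul_assoc] at upper
  exact hJ.not_ge (le_of_mul_le_mul_right upper (Real.exp_pos _))

/-! ### Dissipative systems vanish -/

namespace IsIntegratedSolution

variable {τ Cf Cα Cβ κ l δ M : ℝ} {f α β w : ℝ → ℝ → ℝ} {s t : ℝ}

-- Integrate `∂ₓ (∫₀ᵗ α + (x + 1 - y) w) = ∫₀ᵗ β + (x + 1 - y) f` over `y ∈ [x, x + 1]`.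
lemma eq_sub_integral (h : IsIntegratedSolution τ f α β w) (hf : IsRegularFlow Cf f)
    (hβ : IsRegularFlow Cβ β) (ht : t ∈ Icc 0 τ) (x : ℝ) :
    w t x = timePrimitive α t (x + 1) - timePrimitive α t x -
      ∫ y in x..x + 1, (timePrimitive β t y + (x + 1 - y) * f t y) := by
  have cont : Continuous fun y ↦ timePrimitive α t y + (x + 1 - y) * w t y :=
    (h.continuous_timePrimitive t ht).add
      ((continuous_const.sub continuous_id).mul (h.continuous t ht))
  have deriv (y : ℝ) : HasDerivWithinAt (fun y ↦ timePrimitive α t y + (x + 1 - y) * w t y)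
      (timePrimitive β t y + (x + 1 - y) * f t y) (Ioi y) y :=
    ((h.hasDerivWithinAt_timePrimitive t ht y).add
      (((hasDerivWithinAt_id y _).const_sub (x + 1)).mul
        (h.hasDerivWithinAt t ht y))).congr_deriv (by simp; ring)
  have f_int : IntervalIntegrable (f t) volume x (x + 1) :=
    intervalIntegrable_of_locallyIntegrable (hf.isBoundedMeasurable t).locallyIntegrable _ _
  have β_int : IntervalIntegrable (timePrimitive β t) volume x (x + 1) :=
    intervalIntegrable_of_locallyIntegrable
      (hβ.isBoundedMeasurable_timePrimitive t).locallyIntegrable _ _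
  rw [intervalIntegral.integral_eq_sub_of_hasDeriv_right cont.continuousOn (fun y _ ↦ deriv y)
    (β_int.add (f_int.continuousOn_mul (by fun_prop)))]
  ring

lemma abs_integrand_le (hf : IsRegularFlow Cf f) (hβ : IsRegularFlow Cβ β) (ht : t ∈ Icc 0 τ)
    {x y : ℝ} (hy : y ∈ uIoc x (x + 1)) :
    |timePrimitive β t y + (x + 1 - y) * f t y| ≤ Cβ * τ + Cf := by
  rw [uIoc_of_le (by linarith)] at hy
  have distance_le_one : |x + 1 - y| ≤ 1 := abs_le.2 ⟨by linarith [hy.2], by linarith [hy.1]⟩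
  have primitive_le : |timePrimitive β t y| ≤ Cβ * τ :=
    ((hβ.isBoundedMeasurable_timePrimitive t).abs_le y).trans
      (mul_le_mul_of_nonneg_left ((abs_of_nonneg ht.1).trans_le ht.2) hβ.nonneg)
  refine (abs_add_le _ _).trans (add_le_add primitive_le ?_)
  rw [abs_mul]
  exact (mul_le_of_le_one_left (abs_nonneg _) distance_le_one).trans (hf.abs_le t y)

lemma isBoundedMeasurable (h : IsIntegratedSolution τ f α β w) (hf : IsRegularFlow Cf f)
    (hα : IsRegularFlow Cα α) (hβ : IsRegularFlow Cβ β) (ht : t ∈ Icc 0 τ) :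
    IsBoundedMeasurable ((2 * Cα + Cβ) * τ + Cf) (w t) where
  measurable := (h.continuous t ht).measurable
  abs_le x := by
    have primitive_le (y : ℝ) : |timePrimitive α t y| ≤ Cα * τ :=
      ((hα.isBoundedMeasurable_timePrimitive t).abs_le y).trans
        (mul_le_mul_of_nonneg_left ((abs_of_nonneg ht.1).trans_le ht.2) hα.nonneg)
    have integral_le : |∫ y in x..x + 1, (timePrimitive β t y + (x + 1 - y) * f t y)| ≤
        Cβ * τ + Cf := by
      simpa using intervalIntegral.norm_integral_le_of_norm_le_const
        (f := fun y ↦ timePrimitive β t y + (x + 1 - y) * f t y)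
        fun y hy ↦ abs_integrand_le hf hβ ht hy
    rw [h.eq_sub_integral hf hβ ht]
    calc _ ≤ |timePrimitive α t (x + 1)| + |timePrimitive α t x| +
          |∫ y in x..x + 1, (timePrimitive β t y + (x + 1 - y) * f t y)| :=
          (abs_sub _ _).trans (add_le_add_left (abs_sub _ _) _)
      _ ≤ Cα * τ + Cα * τ + (Cβ * τ + Cf) := by gcongr <;> apply primitive_le
      _ = (2 * Cα + Cβ) * τ + Cf := by ring

lemma continuousOn_time (h : IsIntegratedSolution τ f α β w) (hf : IsRegularFlow Cf f)
    (hα : IsRegularFlow Cα α) (hβ : IsRegularFlow Cβ β) (x : ℝ) :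
    ContinuousOn (fun t ↦ w t x) (Icc 0 τ) := by
  refine ContinuousOn.congr ?_ fun t ht ↦ h.eq_sub_integral hf hβ ht x
  refine ((hα.continuous_timePrimitive_time _).sub
    (hα.continuous_timePrimitive_time _)).continuousOn.sub fun t _ ↦ ?_
  refine intervalIntegral.continuousWithinAt_of_dominated_interval
    (bound := fun _ ↦ Cβ * τ + Cf) (.of_forall fun s ↦ ?_) ?_ intervalIntegrable_const ?_
  · have f_meas := (hf.isBoundedMeasurable s).measurable
    have β_meas := hβ.measurable_timePrimitive s
    exact Measurable.aestronglyMeasurable (by fun_prop)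
  · filter_upwards [self_mem_nhdsWithin] with s hs
    exact .of_forall fun y hy ↦ abs_integrand_le hf hβ hs hy
  · filter_upwards [hf.ae_continuousAt t] with y hy _
    exact ((hβ.continuous_timePrimitive_time y).continuousAt.add
      (continuousAt_const.mul hy)).continuousWithinAt

lemma zero_eq_zero (h : IsIntegratedSolution τ f α β w) (hτ : 0 ≤ τ) : w 0 = 0 := by
  funext x
  have deriv := h.hasDerivWithinAt_timePrimitive 0 (left_mem_Icc.2 hτ) x
  rw [timePrimitive_zero, timePrimitive_zero, add_zero] at deriv
  exact (uniqueDiffWithinAt_Ioi x).eq_deriv _ deriv (hasDerivWithinAt_const x _ 0)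

lemma tendsto_energyRate_slope (h : IsIntegratedSolution τ f α β w) (hf : IsRegularFlow Cf f)
    (hα : IsRegularFlow Cα α) (hβ : IsRegularFlow Cβ β) (hκ : 0 < κ) (hl : 0 ≤ l)
    (hs : s ∈ Ico 0 τ) :
    Tendsto (fun t ↦ energyRate κ l (f t) (w t) (slope (timePrimitive α) s t)
      (slope (timePrimitive β) s t)) (𝓝[>] s) (𝓝 (energyRate κ l (f s) (w s) (α s) (β s))) := by
  have slope_lim {C : ℝ} {h : ℝ → ℝ → ℝ} (hh : IsRegularFlow C h) :
      ∀ᵐ x, Tendsto (fun t ↦ slope (timePrimitive h) s t x) (𝓝[>] s) (𝓝 (h s x)) :=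
    (hh.ae_hasDerivAt_timePrimitive s).mono fun x hx ↦
      (hasDerivWithinAt_iff_tendsto_slope' self_notMem_Ioi).1 hx.hasDerivWithinAt
  have slope_bdd {C : ℝ} {h : ℝ → ℝ → ℝ} (hh : IsRegularFlow C h) :
      ∀ᶠ t in 𝓝[>] s, IsBoundedMeasurable C (slope (timePrimitive h) s t) :=
    eventually_mem_nhdsWithin.mono fun t ht ↦ hh.isBoundedMeasurable_slope_timePrimitive ht.ne
  have near_s : Icc 0 τ ∈ 𝓝[>] s :=
    mem_of_superset (Ioo_mem_nhdsGT hs.2) fun t ht ↦ ⟨hs.1.trans ht.1.le, ht.2.le⟩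
  exact tendsto_energyRate hκ hl (.of_forall hf.isBoundedMeasurable)
    (mem_of_superset near_s fun t ht ↦ h.isBoundedMeasurable hf hα hβ ht) (slope_bdd hα)
    (slope_bdd hβ) ((hf.ae_continuousAt s).mono fun x hx ↦ hx.mono_left nhdsWithin_le_nhds)
    (fun x ↦ (h.continuousOn_time hf hα hβ x s ⟨hs.1, hs.2.le⟩).mono_left
      (nhdsWithin_le_of_mem near_s)) (slope_lim hα) (slope_lim hβ)

lemma slope_energy_le (h : IsIntegratedSolution τ f α β w) (hf : IsRegularFlow Cf f)
    (hα : IsRegularFlow Cα α) (hβ : IsRegularFlow Cβ β) (hκ : 0 < κ) (hl : 0 ≤ l)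
    (hs : s ∈ Icc 0 τ) (ht : t ∈ Icc 0 τ) (hst : s < t) :
    slope (fun t ↦ energy κ l (w t)) s t ≤
      energyRate κ l (f t) (w t) (slope (timePrimitive α) s t) (slope (timePrimitive β) s t) := by
  have increment : energy κ l (w t) - energy κ l (w s) ≤ energyRate κ l (f t) (w t)
      (timePrimitive α t - timePrimitive α s) (timePrimitive β t - timePrimitive β s) :=
    energy_sub_energy_le hκ hl (h.continuous t ht) (h.isBoundedMeasurable hf hα hβ ht)
      (h.isBoundedMeasurable hf hα hβ hs) (hf.isBoundedMeasurable t) (h.hasDerivWithinAt t ht)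
      ((h.continuous_timePrimitive t ht).sub (h.continuous_timePrimitive s hs))
      (hα.isBoundedMeasurable_timePrimitive_sub s t) (hβ.isBoundedMeasurable_timePrimitive_sub s t)
      fun x ↦ ((h.hasDerivWithinAt_timePrimitive t ht x).sub
        (h.hasDerivWithinAt_timePrimitive s hs x)).congr_deriv (by rw [Pi.sub_apply]; ring)
  rw [slope_def_module, slope_def_module, slope_def_module, energyRate_smul, smul_eq_mul]
  exact mul_le_mul_of_nonneg_left increment (inv_nonneg.2 (sub_nonneg.2 hst.le))

lemma energy_le (h : IsIntegratedSolution τ f α β w) (hf : IsRegularFlow Cf f)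
    (hα : IsRegularFlow Cα α) (hβ : IsRegularFlow Cβ β) (hnonneg : ∀ t x, 0 ≤ f t x * α t x)
    (hM : ∀ t x, |β t x| ≤ δ + M * (f t x * α t x)) (hκ : 0 < κ) (hl : 0 ≤ l) (hlM : M ≤ l)
    (ht : t ∈ Icc 0 τ) :
    energy κ l (w t) ≤ (∫ x, weight κ x) * Real.exp (l * (κ * Cα + δ) * t) := by
  have cont : ContinuousOn (fun t ↦ energy κ l (w t)) (Icc 0 τ) := fun s hs ↦
    tendsto_energy hκ hl (eventually_mem_nhdsWithin.mono fun t ht ↦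
      h.isBoundedMeasurable hf hα hβ ht) fun x ↦ h.continuousOn_time hf hα hβ x s hs
  have initial : energy κ l (w 0) ≤ ∫ x, weight κ x := by
    simp [h.zero_eq_zero (ht.1.trans ht.2), energy, weightedExp]
  have rate_le (s : ℝ) (hs : s ∈ Ico 0 τ) : energyRate κ l (f s) (w s) (α s) (β s) ≤
      l * (κ * Cα + δ) * energy κ l (w s) + 0 := by
    rw [add_zero]
    exact energyRate_le hκ hl hlM (h.isBoundedMeasurable hf hα hβ ⟨hs.1, hs.2.le⟩)
      (hf.isBoundedMeasurable s) (hα.isBoundedMeasurable s) (hβ.isBoundedMeasurable s)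
      (hnonneg s) (hM s)
  have gronwall := le_gronwallBound_of_liminf_deriv_right_le cont (fun s hs r hr ↦ ?_)
    initial rate_le t ht
  · rwa [gronwallBound_ε0, sub_zero] at gronwall
  refine Eventually.frequently ?_
  filter_upwards [(h.tendsto_energyRate_slope hf hα hβ hκ hl hs).eventually_lt_const hr,
    Ioo_mem_nhdsGT hs.2] with t rate_lt ht
  exact (h.slope_energy_le hf hα hβ hκ hl ⟨hs.1, hs.2.le⟩ ⟨hs.1.trans ht.1.le, ht.2.le⟩
    ht.1).trans_lt rate_lt

lemma le_mul_time (h : IsIntegratedSolution τ f α β w) (hf : IsRegularFlow Cf f)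
    (hα : IsRegularFlow Cα α) (hβ : IsRegularFlow Cβ β) (hnonneg : ∀ t x, 0 ≤ f t x * α t x)
    (hM : ∀ t x, |β t x| ≤ δ + M * (f t x * α t x)) (hκ : 0 < κ) (ht : t ∈ Icc 0 τ) (x : ℝ) :
    w t x ≤ (κ * Cα + δ) * t := by
  refine le_of_integral_mul_exp_le (weight_pos κ) (integrable_weight hκ) (h.continuous t ht)
    (L := max M 0) (J := ∫ x, weight κ x) (fun l hl ↦ ?_) (fun l hl ↦ ?_) x
  · exact integrable_weightedExp hκ (le_of_max_le_right hl) (h.isBoundedMeasurable hf hα hβ ht)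
  · rw [← mul_assoc]
    exact h.energy_le hf hα hβ hnonneg hM hκ (le_of_max_le_right hl) (le_of_max_le_left hl) ht

lemma nonpos (h : IsIntegratedSolution τ f α β w) (hf : IsRegularFlow Cf f)
    (hα : IsRegularFlow Cα α) (hβ : IsRegularFlow Cβ β) (hnonneg : ∀ t x, 0 ≤ f t x * α t x)
    (hctrl : ∀ δ > 0, ∃ M, ∀ t x, |β t x| ≤ δ + M * (f t x * α t x)) (ht : t ∈ Icc 0 τ) (x : ℝ) :
    w t x ≤ 0 := by
  have bound (κ : ℝ) (hκ : κ ∈ Ioi 0) : w t x ≤ (κ * Cα + κ) * t := by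
    obtain ⟨M, hM⟩ := hctrl κ hκ
    exact h.le_mul_time hf hα hβ hnonneg hM hκ ht x
  have lim : Tendsto (fun κ : ℝ ↦ (κ * Cα + κ) * t) (𝓝[>] 0) (𝓝 0) :=
    tendsto_nhdsWithin_of_tendsto_nhds (Continuous.tendsto' (by fun_prop) _ _ (by simp))
  exact ge_of_tendsto lim (eventually_mem_nhdsWithin.mono bound)

lemma eq_zero (h : IsIntegratedSolution τ f α β w) (hf : IsRegularFlow Cf f)
    (hα : IsRegularFlow Cα α) (hβ : IsRegularFlow Cβ β) (hnonneg : ∀ t x, 0 ≤ f t x * α t x)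
    (hctrl : ∀ δ > 0, ∃ M, ∀ t x, |β t x| ≤ δ + M * (f t x * α t x)) (ht : t ∈ Icc 0 τ) (x : ℝ) :
    f t x = 0 := by
  have w_eq_zero : w t = fun _ ↦ 0 := funext fun y ↦
    (h.nonpos hf hα hβ hnonneg hctrl ht y).antisymm <| neg_nonpos.1 <|
      h.neg.nonpos hf.neg hα.neg hβ.neg (by simpa only [neg_mul_neg] using hnonneg)
        (by simpa only [neg_mul_neg, abs_neg] using hctrl) ht y
  have deriv := h.hasDerivWithinAt t ht x
  rw [w_eq_zero] at deriv
  exact (uniqueDiffWithinAt_Ioi x).eq_deriv _ deriv (hasDerivWithinAt_const x _ 0)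

end IsIntegratedSolution

/-! ### Uniqueness -/

lemma exists_forall_le_add_mul_of_isCompact {X : Type*} [TopologicalSpace X] [T2Space X]
    {K : Set X} {f g : X → ℝ} {δ : ℝ} (hK : IsCompact K) (hf : ContinuousOn f K)
    (hg : ContinuousOn g K) (g_nonneg : ∀ p ∈ K, 0 ≤ g p) (hfg : ∀ p ∈ K, g p = 0 → f p ≤ 0)
    (hδ : 0 < δ) : ∃ M, ∀ p ∈ K, f p ≤ δ + M * g p := by
  have compact_large : IsCompact (K ∩ f ⁻¹' Ici δ) :=
    hK.of_isClosed_subset (hf.preimage_isClosed_of_isClosed hK.isClosed isClosed_Ici)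
      inter_subset_left
  obtain ⟨c, c_pos, hc⟩ := compact_large.exists_forall_le' (hg.mono inter_subset_left) (a := 0)
    fun p hp ↦ (g_nonneg p hp.1).lt_of_ne' fun g_zero ↦
      (hδ.trans_le hp.2).not_ge (hfg p hp.1 g_zero)
  obtain ⟨C, hC⟩ := hK.exists_bound_of_continuousOn hf
  refine ⟨|C| / c, fun p hp ↦ ?_⟩
  rcases lt_or_ge (f p) δ with small | large
  · exact small.le.trans (le_add_of_nonneg_right (mul_nonneg (by positivity) (g_nonneg p hp)))
  · calc f p ≤ |C| := (le_abs_self _).trans ((hC p hp).trans (le_abs_self C))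
      _ = |C| / c * c := (div_mul_cancel₀ _ c_pos.ne').symm
      _ ≤ |C| / c * g p := by
        gcongr
        exact hc p ⟨hp, large⟩
      _ ≤ δ + |C| / c * g p := le_add_of_nonneg_left hδ.le

lemma sub_mul_sub_nonneg_of_monotoneOn {φ : ℝ → ℝ} {s : Set ℝ} {u v : ℝ} (hφ : MonotoneOn φ s)
    (hu : u ∈ s) (hv : v ∈ s) : 0 ≤ (u - v) * (φ u - φ v) := by
  rcases le_total u v with huv | hvu
  · exact mul_nonneg_of_nonpos_of_nonpos (sub_nonpos.2 huv) (sub_nonpos.2 (hφ hu hv huv))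
  · exact mul_nonneg (sub_nonneg.2 hvu) (sub_nonneg.2 (hφ hv hu hvu))

lemma exists_abs_sub_le_add_mul_of_strictMonoOn {φ ψ : ℝ → ℝ} {s : Set ℝ} {δ : ℝ}
    (hs : IsCompact s) (hφ : ContinuousOn φ s) (φ_strictMono : StrictMonoOn φ s)
    (hψ : ContinuousOn ψ s) (hδ : 0 < δ) :
    ∃ M, ∀ u ∈ s, ∀ v ∈ s, |ψ u - ψ v| ≤ δ + M * ((u - v) * (φ u - φ v)) := by
  have cont_sub {χ : ℝ → ℝ} (hχ : ContinuousOn χ s) :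
      ContinuousOn (fun p : ℝ × ℝ ↦ χ p.1 - χ p.2) (s ×ˢ s) :=
    (hχ.comp continuousOn_fst fun _ hp ↦ hp.1).sub (hχ.comp continuousOn_snd fun _ hp ↦ hp.2)
  have eq_of_zero (p : ℝ × ℝ) (hp : p ∈ s ×ˢ s) (hzero : (p.1 - p.2) * (φ p.1 - φ p.2) = 0) :
      p.1 = p.2 := by
    rcases mul_eq_zero.1 hzero with h | h
    · exact sub_eq_zero.1 h
    · exact φ_strictMono.injOn hp.1 hp.2 (sub_eq_zero.1 h)
  obtain ⟨M, hM⟩ := exists_forall_le_add_mul_of_isCompact (hs.prod hs) (cont_sub hψ).abs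
    ((cont_sub continuousOn_id).mul (cont_sub hφ))
    (fun p hp ↦ sub_mul_sub_nonneg_of_monotoneOn φ_strictMono.monotoneOn hp.1 hp.2)
    (fun p hp hzero ↦ by simp [eq_of_zero p hp hzero]) hδ
  exact ⟨M, fun u hu v hv ↦ hM (u, v) ⟨hu, hv⟩⟩

lemma continuousOn_primitive {f : ℝ → ℝ} {c : ℝ} (hc : 0 ≤ c) (hf : ContinuousOn f (Icc 0 c)) :
    ContinuousOn (primitive f) (Icc 0 c) := by
  rw [← uIcc_of_le hc] at hf ⊢
  exact intervalIntegral.continuousOn_primitive_interval (hf.integrableOn_compact isCompact_uIcc)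

/-- On the time interval `[0, T)`, `F t` is the cumulative distribution function of `P t` for a
weakly continuous flow of probability measures `P`: the class `𝓕(T)` without its moment
conditions. -/
def IsCdfFlow (T : ℝ≥0∞) (F : ℝ → ℝ → ℝ) : Prop :=
  ∃ P : ℝ → ProbabilityMeasure ℝ, ContinuousOn P {t | 0 ≤ t ∧ ENNReal.ofReal t < T} ∧
    ∀ t, 0 ≤ t → ENNReal.ofReal t < T → F t = cdfOf (P t)

lemma MemFT.isCdfFlow {T : ℝ≥0∞} {F : ℝ → ℝ → ℝ} (hF : MemFT T F) : IsCdfFlow T F := by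
  obtain ⟨P, P_cont, -, -, hFP⟩ := hF
  exact ⟨P, P_cont, fun t ht hT ↦ funext (hFP t ht hT)⟩

lemma IsCdfFlow.exists_isRegularFlow {T : ℝ≥0∞} {F : ℝ → ℝ → ℝ} {τ : ℝ} (hF : IsCdfFlow T F)
    (hτ : 0 ≤ τ) (hT : ENNReal.ofReal τ < T) :
    ∃ G, IsRegularFlow 1 G ∧ (∀ t x, G t x ∈ Icc 0 1) ∧ ∀ t ∈ Icc 0 τ, F t = G t := by
  obtain ⟨P, P_cont, hFP⟩ := hF
  have before_T {t : ℝ} (ht : t ∈ Icc 0 τ) : 0 ≤ t ∧ ENNReal.ofReal t < T :=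
    ⟨ht.1, (ENNReal.ofReal_le_ofReal ht.2).trans_lt hT⟩
  have clamped_cont : Continuous fun t ↦ P (projIcc 0 τ hτ t) :=
    P_cont.comp_continuous (continuous_subtype_val.comp continuous_projIcc)
      fun t ↦ before_T (projIcc 0 τ hτ t).2
  refine ⟨_, isRegularFlow_cdfOf clamped_cont, fun t ↦ cdfOf_mem_Icc _, fun t ht ↦ ?_⟩
  rw [projIcc_of_mem hτ ht, hFP t ht.1 (before_T ht).2]

theorem uniqueness_weak_solution_general {A B F₀ : ℝ → ℝ} {T : ℝ≥0∞} {F₁ F₂ : ℝ → ℝ → ℝ}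
    (hA : ContinuousOn A (Icc 0 1)) (A_strictMono : StrictMonoOn A (Icc 0 1))
    (hB : ContinuousOn B (Icc 0 1)) (hF₀ : LocallyIntegrable F₀)
    (F₀_right : ∀ x, ContinuousWithinAt F₀ (Ici x) x)
    (hF₁ : IsWeakSolutionOn A B F₀ T F₁) (F₁_flow : IsCdfFlow T F₁)
    (hF₂ : IsWeakSolutionOn A B F₀ T F₂) (F₂_flow : IsCdfFlow T F₂) {τ : ℝ} (hτ : 0 ≤ τ)
    (hT : ENNReal.ofReal τ < T) : F₁ τ = F₂ τ := by
  have half_A_cont : ContinuousOn (fun u ↦ 1 / 2 * A u) (Icc 0 1) := continuousOn_const.mul hA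
  have half_A_strictMono : StrictMonoOn (fun u ↦ 1 / 2 * A u) (Icc 0 1) :=
    fun u hu v hv huv ↦ mul_lt_mul_of_pos_left (A_strictMono hu hv huv) one_half_pos
  obtain ⟨G₁, hG₁, G₁_mem, hFG₁⟩ := F₁_flow.exists_isRegularFlow hτ hT
  obtain ⟨G₂, hG₂, G₂_mem, hFG₂⟩ := F₂_flow.exists_isRegularFlow hτ hT
  obtain ⟨CA, hCA⟩ := isCompact_Icc.exists_bound_of_continuousOn half_A_cont
  obtain ⟨CB, hCB⟩ := isCompact_Icc.exists_bound_of_continuousOn hB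
  have hα₁ := IsRegularFlow.comp half_A_cont hCA hG₁ G₁_mem
  have hα₂ := IsRegularFlow.comp half_A_cont hCA hG₂ G₂_mem
  have hβ₁ := IsRegularFlow.comp hB hCB hG₁ G₁_mem
  have hβ₂ := IsRegularFlow.comp hB hCB hG₂ G₂_mem
  obtain ⟨w₁, hw₁⟩ := hF₁.exists_isIntegratedSolution hT hF₀ F₀_right hFG₁ hG₁ hα₁ hβ₁
  obtain ⟨w₂, hw₂⟩ := hF₂.exists_isIntegratedSolution hT hF₀ F₀_right hFG₂ hG₂ hα₂ hβ₂
  have hw := hw₁.sub hw₂ hα₁ hα₂ hβ₁ hβ₂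
  simp only [sub_sub_sub_cancel_right] at hw
  have right_mem : τ ∈ Icc 0 τ := right_mem_Icc.2 hτ
  rw [hFG₁ τ right_mem, hFG₂ τ right_mem]
  refine funext fun x ↦ sub_eq_zero.1 <|
    hw.eq_zero (hG₁.sub hG₂) (hα₁.sub hα₂) (hβ₁.sub hβ₂) (fun t x ↦ ?_) (fun δ hδ ↦ ?_)
      right_mem x
  · exact sub_mul_sub_nonneg_of_monotoneOn half_A_strictMono.monotoneOn (G₁_mem t x) (G₂_mem t x)
  · obtain ⟨M, hM⟩ := exists_abs_sub_le_add_mul_of_strictMonoOn isCompact_Icc half_A_cont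
      half_A_strictMono hB hδ
    exact ⟨M, fun t x ↦ hM _ (G₁_mem t x) _ (G₂_mem t x)⟩

/-- Under (D1), two elements of `𝓕(T)` satisfying the weak formulation of the Cauchy
problem with the same initial condition `H*m` coincide on `[0,T) × ℝ`. -/
theorem uniqueness_weak_solution
    (a b : ℝ → ℝ)
    (ha : ContinuousOn a (Set.Icc 0 1)) (hb : ContinuousOn b (Set.Icc 0 1))
    (ha0 : ∀ u ∈ Set.Icc (0:ℝ) 1, 0 ≤ a u)
    (hD1 : StrictMonoOn (primitive a) (Set.Icc 0 1))
    (m : Measure ℝ) [IsProbabilityMeasure m]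
    (T : ℝ≥0∞) (hT : 0 < T)
    (F₁ F₂ : ℝ → ℝ → ℝ)
    (hF₁ : IsWeakSolutionOn (primitive a) (primitive b) (cdfOf m) T F₁)
    (hF₁mem : MemFT T F₁)
    (hF₂ : IsWeakSolutionOn (primitive a) (primitive b) (cdfOf m) T F₂)
    (hF₂mem : MemFT T F₂) :
    ∀ t : ℝ, 0 ≤ t → ENNReal.ofReal t < T → ∀ x : ℝ, F₁ t x = F₂ t x := by
  intro t ht htT x
  exact congrFun (uniqueness_weak_solution_general (continuousOn_primitive zero_le_one ha) hD1
    (continuousOn_primitive zero_le_one hb) (locallyIntegrable_cdfOf m)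
    (continuousWithinAt_Ici_cdfOf m) hF₁ hF₁mem.isCdfFlow hF₂ hF₂mem.isCdfFlow ht htT) x
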